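/- Let W ∈ (0,1) and let s : ℤ → ℂ be finitely supported, with discrete-time Fourier transform Ŝ(f) := Σ_{n∈ℤ} s[n]·e^{−2πi f n}. Define the band-limited interpolation b[n] := Σ_{q∈ℤ} s[q]·sinc(W(n−q)) for n ∈ ℤ. Then W²·Σ_{n∈ℤ} |b[n]|² = ∫_{−W/2}^{W/2} |Ŝ(f)|² df. -/

import Mathlib

open scoped BigOperators

/-- normalized sinc: sinc(x) = sin(πx)/(πx) for x ≠ 0, sinc(0) = 1. -/
noncomputable def sinc (x : ℝ) : ℝ :=
  if x = 0 then 1 else Real.sin (Real.pi * x) / (Real.pi * x)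

/-! Parseval's identity is applied, on an interval of length one containing `[-W/2, W/2]`, to the
truncation of `Ŝ` to `[-W/2, W/2]`. Integrating the series of `Ŝ` termwise and using that
`W sinc(W t)` is the inverse Fourier transform of the indicator function of this band, one sees
that the Fourier coefficients of the truncation are the numbers `W b[-n]`. -/

open Complex MeasureTheory Set
open scoped Real

theorem hasSum_sq_norm_integral_exp_mul {a b T : ℝ} (hT : 0 < T) (hab : a ≤ b) (hbT : b ≤ a + T)
    {f : ℝ → ℂ} (hf : MemLp f 2 (volume.restrict (Ioc a b))) :
    HasSum (fun n : ℤ ↦ ‖∫ x in a..b, exp (-2 * π * I * n * x / T) * f x‖ ^ 2)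
      (T * ∫ x in a..b, ‖f x‖ ^ 2) := by
  have hlt : a < a + T := by linarith
  have hb : b ∈ Icc a (a + T) := ⟨hab, hbT⟩
  let g : ℝ → ℂ := (Iic b).indicator f
  have hg : MemLp g 2 (volume.restrict (Ioc a (a + T))) := by
    unfold g
    rwa [memLp_indicator_iff_restrict measurableSet_Iic,
      Measure.restrict_restrict measurableSet_Iic, inter_comm, Ioc_inter_Iic, inf_eq_right.mpr hbT]
  have hcoeff (n : ℤ) : fourierCoeffOn hlt g n =
      T⁻¹ * ∫ x in a..b, exp (-2 * π * I * n * x / T) * f x := by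
    rw [fourierCoeffOn_eq_integral, ← intervalIntegral.integral_indicator hb, Iic_def]
    simp only [g, fourier_coe_apply, indicator_mul_right, smul_eq_mul, real_smul,
      add_sub_cancel_left, Int.cast_neg, one_div, ofReal_inv, mul_neg, neg_mul]
  have hnorm : ∫ x in a..(a + T), ‖g x‖ ^ 2 = ∫ x in a..b, ‖f x‖ ^ 2 := by
    rw [← intervalIntegral.integral_indicator hb]
    congr! 2 with x
    by_cases hx : x ≤ b <;> simp [g, hx]
  have parseval := (hasSum_sq_fourierCoeffOn hlt hg).mul_left (T ^ 2)
  simp only [hnorm, hcoeff, add_sub_cancel_left, smul_eq_mul, norm_mul, mul_pow, norm_inv,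
    norm_real, Real.norm_of_nonneg hT.le, inv_pow, mul_inv_cancel_left₀ (pow_ne_zero 2 hT.ne')]
    at parseval
  rwa [← mul_assoc, sq, mul_assoc T, mul_inv_cancel₀ hT.ne', mul_one] at parseval

theorem sinc_eq_real_sinc (x : ℝ) : sinc x = Real.sinc (π * x) := by
  simp [sinc, Real.sinc, Real.pi_ne_zero]

theorem integral_exp_eq_mul_sinc (W t : ℝ) :
    ∫ f in (-(W / 2))..(W / 2), exp (2 * π * I * f * t) = W * sinc (W * t) := by
  rcases eq_or_ne t 0 with rfl | ht
  · simp [sinc]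
  have hscale : 2 * π * t ≠ 0 := by positivity
  calc ∫ f in (-(W / 2))..(W / 2), exp (2 * π * I * f * t)
    _ = ∫ f in (-(W / 2))..(W / 2), exp ((2 * π * t * f : ℝ) * I) := by
      congr! 3
      push_cast
      ring
    _ = (2 * π * t)⁻¹ • ∫ y in (-(π * (W * t)))..(π * (W * t)), exp (y * I) := by
      rw [intervalIntegral.integral_comp_mul_left (fun y : ℝ ↦ exp (y * I)) hscale]
      congr 2 <;> ring
    _ = W * sinc (W * t) := by
      rw [integral_exp_mul_I_eq_sinc, ← sinc_eq_real_sinc, real_smul]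
      have : (t : ℂ) ≠ 0 := ofReal_ne_zero.mpr ht
      push_cast
      field_simp

/-- The discrete-time Fourier transform `Ŝ` of a sequence, as a function on `ℝ`; it has the junk
value `0` where the series does not converge. -/
noncomputable def dtft (s : ℤ → ℂ) (f : ℝ) : ℂ :=
  ∑' n : ℤ, s n * exp (-2 * π * I * f * n)

/-- The band-limited interpolation of a sequence with bandwidth `W`, as a function of a real time
`t`; its values at integers are the sequence `b`. -/
noncomputable def sincInterpolation (W : ℝ) (s : ℤ → ℂ) (t : ℝ) : ℂ :=
  ∑' q : ℤ, s q * sinc (W * (t - q))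

section Summable

variable {s : ℤ → ℂ}

theorem hasSum_dtft (hs : Summable s) (f : ℝ) :
    HasSum (fun n : ℤ ↦ s n * exp (-2 * π * I * f * n)) (dtft s f) :=
  (Summable.of_norm_bounded hs.norm fun n ↦ by simp [norm_exp]).hasSum

theorem continuous_dtft (hs : Summable s) : Continuous (dtft s) :=
  continuous_tsum (fun n ↦ by fun_prop) hs.norm fun n f ↦ by simp [norm_exp]

theorem integral_exp_mul_dtft (hs : Summable s) (W t : ℝ) :
    ∫ f in (-(W / 2))..(W / 2), exp (2 * π * I * f * t) * dtft s f =
      W * sincInterpolation W s t := by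
  have hasSum_modulated (f : ℝ) :
      HasSum (fun q : ℤ ↦ s q * exp (2 * π * I * f * (t - q : ℝ)))
        (exp (2 * π * I * f * t) * dtft s f) := by
    have modulate (q : ℤ) : exp (2 * π * I * f * t) * (s q * exp (-2 * π * I * f * q)) =
        s q * exp (2 * π * I * f * (t - q : ℝ)) := by
      rw [mul_left_comm, ← exp_add]
      push_cast
      ring_nf
    simpa only [modulate] using (hasSum_dtft hs f).mul_left (exp (2 * π * I * f * t))
  have hasSum_integral := intervalIntegral.hasSum_integral_of_dominated_convergence
    (μ := volume) (a := -(W / 2)) (b := W / 2) (fun q _ ↦ ‖s q‖)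
    (fun q ↦ (by fun_prop : Continuous fun f : ℝ ↦
      s q * exp (2 * π * I * f * (t - q : ℝ))).aestronglyMeasurable)
    (fun q ↦ .of_forall fun f _ ↦ by simp [norm_exp]) (.of_forall fun _ _ ↦ hs.norm)
    intervalIntegrable_const (.of_forall fun f _ ↦ hasSum_modulated f)
  rw [← hasSum_integral.tsum_eq, sincInterpolation, ← tsum_mul_left]
  congr! 2 with q
  rw [intervalIntegral.integral_const_mul, integral_exp_eq_mul_sinc, mul_left_comm]

end Summable

theorem bandlimited_energy_eq_inband_spectrum_general {W : ℝ} (hW : W ∈ Icc (0 : ℝ) 1)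
    {s : ℤ → ℂ} (hs : Summable s) :
    HasSum (fun n : ℤ ↦ W ^ 2 * ‖sincInterpolation W s n‖ ^ 2)
      (∫ f in (-(W / 2))..(W / 2), ‖dtft s f‖ ^ 2) := by
  obtain ⟨hW0, hW1⟩ := hW
  have hmem : MemLp (dtft s) 2 (volume.restrict (Ioc (-(W / 2)) (W / 2))) :=
    (memLp_two_iff_integrable_sq_norm (continuous_dtft hs).aestronglyMeasurable).2
      ((continuous_dtft hs).norm.pow 2).integrableOn_Ioc
  have hcoeff (n : ℤ) : ∫ f in (-(W / 2))..(W / 2),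
      exp (-2 * π * I * (-n : ℤ) * f / (1 : ℝ)) * dtft s f = W * sincInterpolation W s n := by
    simpa [mul_right_comm] using integral_exp_mul_dtft hs W n
  have parseval := (Equiv.neg ℤ).hasSum_iff.mpr <|
    hasSum_sq_norm_integral_exp_mul one_pos (by linarith) (by linarith) hmem
  simpa only [Function.comp_def, Equiv.neg_apply, hcoeff, norm_mul, mul_pow, norm_real,
    Real.norm_eq_abs, sq_abs, one_mul] using parseval

/-- Parseval-type identity for band-limited interpolation: the energy of the
band-limited interpolation of a finitely supported sequence, scaled by `W²`, equals the
in-band spectral energy of the sequence. -/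
theorem bandlimited_energy_eq_inband_spectrum
    (W : ℝ) (hW : W ∈ Set.Ioo (0 : ℝ) 1)
    (s : ℤ → ℂ) (hs : (Function.support s).Finite)
    (S : ℝ → ℂ)
    (hS : ∀ f : ℝ, S f = ∑' n : ℤ, s n * Complex.exp (-2 * (Real.pi : ℂ) * Complex.I * (f : ℂ) * (n : ℂ)))
    (b : ℤ → ℂ)
    (hb : ∀ n : ℤ, b n = ∑' q : ℤ, s q * (sinc (W * ((n : ℝ) - (q : ℝ))) : ℂ)) :
    W ^ 2 * ∑' n : ℤ, ‖b n‖ ^ 2 = ∫ f in (-(W/2))..(W/2), ‖S f‖ ^ 2 := by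
  obtain rfl : S = dtft s := funext hS
  obtain rfl : b = fun n : ℤ ↦ sincInterpolation W s n := funext hb
  rw [← tsum_mul_left]
  exact (bandlimited_energy_eq_inband_spectrum_general (Ioo_subset_Icc_self hW)
    (summable_of_hasFiniteSupport hs)).tsum_eq
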